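/- For every pair of partitions λ, μ of the same non-negative integer n, there exists a unique polynomial K_{λ,μ}(c,h) ∈ ℚ[c,h] in two variables such that for every complex vector space V, every pair (c,h) of complex numbers, every Virasoro family L with central charge c on V, and every highest-weight vector v of weight h, one has L_μ(L_{−λ} v) = K_{λ,μ}(c,h) • v. Moreover K_{λ,μ} = K_{μ,λ}. -/

import Mathlib

/-!
Existence and symmetry. Consider arbitrary words `L w₁ ⋯ L w_k` with `w₁ + ⋯ + w_k = 0`. The
Virasoro relation exchanges two neighbouring letters at the cost of shorter words, with
coefficients polynomial in `c`, so by induction on the length a letter `x ≥ 0` may be moved to the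
right end (`word_induction`), where it kills `v` or multiplies it by `h`. Along the induction one
follows simultaneously the word and its image under the anti-involution `L n ↦ L (-n)`; the
relation is stable under this involution, so both words act by the same polynomial
(`wordOp_zero`). The involution exchanges `L_μ L_{-λ}` and `L_λ L_{-μ}`, which gives
`K_{λ,μ} = K_{μ,λ}`.

Uniqueness. It suffices that for all `(c, h)` there is a module with a *nonzero* highest-weight
vector (`exists_highest`); then two admissible polynomials agree at all points of `ℂ²`. Such a
module is the bosonic Fock space `ℂ[x₁, x₂, …]` with the Sugawara operators of momentum `α` and
background charge `β`, for which `c = 1 - 12 β²` and `h = (α² - β²) / 2`, with vacuum `1`.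
The Virasoro relations are checked without manipulating infinite sums: an operator commuting with
all creation operators is determined by its value on the vacuum (`eq_zero_of_comm`), so that
first `[L_n, a_m] = -m a_{n+m}` (`sug_comm`) and then the Virasoro relation (`sug_virasoro`)
reduce to computations on the vacuum.

The test modules of the various occurrences of `ShapovalovProp` may live in different universes;
`ShapovalovProp.down` transfers the property to `Type` along `ULift`.
-/

/-- A Virasoro family with central charge `c` on the complex vector space `V`. -/
def VirasoroFamily {V : Type*} [AddCommGroup V] [Module ℂ V]
    (c : ℂ) (L : ℤ → Module.End ℂ V) : Prop :=
  ∀ m n : ℤ,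
    L m * L n - L n * L m
      = ((m : ℂ) - (n : ℂ)) • L (m + n)
        + (if m + n = 0 then c / 12 * (m : ℂ) * ((m : ℂ) ^ 2 - 1) else 0) •
            (1 : Module.End ℂ V)

/-- A highest-weight vector of weight `h`. -/
def IsHighestWeightVector {V : Type*} [AddCommGroup V] [Module ℂ V]
    (L : ℤ → Module.End ℂ V) (h : ℂ) (v : V) : Prop :=
  (∀ n : ℤ, 1 ≤ n → L n v = 0) ∧ L 0 v = h • v

/-- `L_{-λ} = L_{-λ_k} ∘ ⋯ ∘ L_{-λ_1}` for a partition `λ₁ ≥ ⋯ ≥ λ_k`. -/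
noncomputable def lowerOp {V : Type*} [AddCommGroup V] [Module ℂ V]
    (L : ℤ → Module.End ℂ V) {n : ℕ} (lam : n.Partition) : Module.End ℂ V :=
  ((lam.parts.sort (· ≤ ·)).map fun i => L (-(i : ℤ))).prod

/-- `L_λ = L_{λ_1} ∘ ⋯ ∘ L_{λ_k}` for a partition `λ₁ ≥ ⋯ ≥ λ_k`. -/
noncomputable def raiseOp {V : Type*} [AddCommGroup V] [Module ℂ V]
    (L : ℤ → Module.End ℂ V) {n : ℕ} (lam : n.Partition) : Module.End ℂ V :=
  (((lam.parts.sort (· ≤ ·)).reverse).map fun i => L (i : ℤ)).prod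

/-- The defining property of the Shapovalov polynomial `K_{λ,μ} ∈ ℚ[c,h]`
(variable `0` is `c`, variable `1` is `h`). -/
def ShapovalovProp {n : ℕ} (lam mu : n.Partition) (K : MvPolynomial (Fin 2) ℚ) : Prop :=
  ∀ (V : Type*) [AddCommGroup V] [Module ℂ V] (c h : ℂ) (L : ℤ → Module.End ℂ V) (v : V),
    VirasoroFamily c L → IsHighestWeightVector L h v →
      raiseOp L mu (lowerOp L lam v) = (MvPolynomial.aeval ![c, h] K) • v

/-! ### Words in the Virasoro operators -/

/-- The composite `L w₁ ∘ ⋯ ∘ L w_k` attached to a word `w` in `ℤ`. -/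
noncomputable def wordOp {V : Type*} [AddCommGroup V] [Module ℂ V]
    (L : ℤ → Module.End ℂ V) (w : List ℤ) : Module.End ℂ V :=
  (w.map L).prod

/-- The image of a word under the anti-involution `L n ↦ L (-n)`. -/
def dagger (w : List ℤ) : List ℤ := (w.map fun i => -i).reverse

lemma dagger_append (a b : List ℤ) : dagger (a ++ b) = dagger b ++ dagger a := by
  simp [dagger]

lemma dagger_cons (x : ℤ) (b : List ℤ) : dagger (x :: b) = dagger b ++ [-x] := by
  simp [dagger]

lemma dagger_sum (w : List ℤ) : (dagger w).sum = -w.sum := by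
  induction w with
  | nil => simp [dagger]
  | cons x b ih => rw [dagger_cons, List.sum_append, ih]; simp

section Words

variable {V : Type*} [AddCommGroup V] [Module ℂ V] {L : ℤ → Module.End ℂ V}

lemma wordOp_append (L : ℤ → Module.End ℂ V) (a b : List ℤ) :
    wordOp L (a ++ b) = wordOp L a * wordOp L b := by
  simp [wordOp]

lemma wordOp_cons (L : ℤ → Module.End ℂ V) (x : ℤ) (b : List ℤ) :
    wordOp L (x :: b) = L x * wordOp L b := by
  simp [wordOp]

lemma wordOp_nil (L : ℤ → Module.End ℂ V) : wordOp L [] = 1 := by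
  simp [wordOp]

/-- The Virasoro relation applied to two neighbouring letters of a word. -/
lemma wordOp_swap {c : ℂ} (hL : VirasoroFamily c L) (a b : List ℤ) (x y : ℤ) :
    wordOp L (a ++ x :: y :: b) = wordOp L (a ++ y :: x :: b)
      + ((x : ℂ) - y) • wordOp L (a ++ (x + y) :: b)
      + (if x + y = 0 then c / 12 * (x : ℂ) * ((x : ℂ) ^ 2 - 1) else 0) • wordOp L (a ++ b) := by
  have h := hL x y
  have h2 : L x * L y = L y * L x + (((x : ℂ) - y) • L (x + y)
      + (if x + y = 0 then c / 12 * (x : ℂ) * ((x : ℂ) ^ 2 - 1) else 0) •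
        (1 : Module.End ℂ V)) := by
    rw [← h]; abel
  simp only [wordOp_append, wordOp_cons]
  rw [← mul_assoc (L x), h2, ← mul_assoc (L y)]
  simp only [add_mul, mul_add, smul_mul_assoc, mul_smul_comm, one_mul, add_assoc]

end Words

/-- Sorting induction for words. Swapping two neighbours costs only shorter words, so a
letter `x ≥ 0` may be moved to the right end; a nonempty word without such a letter has
negative sum. -/
lemma word_induction (P : List ℤ → Prop)
    (hswap : ∀ a b x y, P (a ++ y :: x :: b) → P (a ++ (x + y) :: b) →
      (x + y = 0 → P (a ++ b)) → P (a ++ x :: y :: b))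
    (hneg : ∀ w : List ℤ, w.sum < 0 → P w) (hnil : P [])
    (hlast : ∀ (w : List ℤ) (x : ℤ), 0 ≤ x → (∀ u : List ℤ, u.length ≤ w.length → P u) →
      P (w ++ [x])) (w : List ℤ) : P w := by
  have bubble : ∀ (x : ℤ) (b a : List ℤ),
      (∀ u : List ℤ, u.length ≤ a.length + b.length → P u) → P (a ++ b ++ [x]) →
        P (a ++ x :: b) := by
    intro x b
    induction b with
    | nil => intro a _ h; simpa using h
    | cons y b ih =>
      intro a hs h
      apply hswap
      · have := ih (a ++ [y]) (fun u hu => hs u (by simp at hu ⊢; omega)) (by simpa using h)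
        simpa using this
      · exact hs _ (by simp)
      · intro _; exact hs _ (by simp)
  induction hn : w.length using Nat.strong_induction_on generalizing w with
  | _ n ih =>
    by_cases hx : ∃ x ∈ w, 0 ≤ x
    · obtain ⟨x, hxw, hx⟩ := hx
      obtain ⟨a, b, rfl⟩ := List.append_of_mem hxw
      have hs : ∀ u : List ℤ, u.length ≤ a.length + b.length → P u := fun u hu =>
        ih u.length (by simp at hn; omega) u rfl
      exact bubble x b a hs (hlast _ x hx (by simpa using hs))
    · push Not at hx
      rcases w with _ | ⟨x, b⟩
      · exact hnil
      · apply hneg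
        have h0 : ∀ l : List ℤ, (∀ y ∈ l, y < 0) → l.sum ≤ 0 := by
          intro l
          induction l with
          | nil => simp
          | cons y l ih' =>
            intro hl
            have h3 := ih' fun z hz => hl z (by simp [hz])
            have h4 := hl y (by simp)
            simp only [List.sum_cons]
            omega
        have h1 : b.sum ≤ 0 := h0 b fun y hy => hx y (by simp [hy])
        have h2 := hx x (by simp)
        simp only [List.sum_cons]
        omega

/-- A word of positive degree annihilates a highest-weight vector. -/
lemma wordOp_pos {V : Type*} [AddCommGroup V] [Module ℂ V] {L : ℤ → Module.End ℂ V}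
    {c h : ℂ} {v : V} (hL : VirasoroFamily c L) (hv : IsHighestWeightVector L h v)
    (w : List ℤ) : 0 < w.sum → wordOp L w v = 0 := by
  refine word_induction (fun w => 0 < w.sum → wordOp L w v = 0) ?_ ?_ ?_ ?_ w
  · intro a b x y h1 h2 h3 hs
    simp only [List.sum_append, List.sum_cons] at h1 h2 h3 hs
    rw [wordOp_swap hL, LinearMap.add_apply, LinearMap.add_apply, LinearMap.smul_apply,
      LinearMap.smul_apply, h1 (by omega), h2 (by omega)]
    split_ifs with hxy
    · rw [h3 hxy (by omega)]; simp
    · simp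
  · intro w h1 h2; omega
  · simp
  · intro w x hx ih hs
    rw [wordOp_append, wordOp_cons, wordOp_nil, mul_one, Module.End.mul_apply]
    rcases hx.eq_or_lt with rfl | hx
    · simp only [List.sum_append, List.sum_singleton, add_zero] at hs
      rw [hv.2, map_smul, ih w le_rfl hs, smul_zero]
    · rw [hv.1 x hx, map_zero]

open MvPolynomial in
/-- A word of degree zero acts on highest-weight vectors by a universal polynomial, which is the
same for the word and for its image under the anti-involution. -/
lemma wordOp_zero (w : List ℤ) : w.sum = 0 → ∃ K : MvPolynomial (Fin 2) ℚ,
    ∀ (V : Type*) [AddCommGroup V] [Module ℂ V] (c h : ℂ) (L : ℤ → Module.End ℂ V) (v : V),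
      VirasoroFamily c L → IsHighestWeightVector L h v →
        wordOp L w v = aeval ![c, h] K • v ∧ wordOp L (dagger w) v = aeval ![c, h] K • v := by
  refine word_induction (fun w => w.sum = 0 → ∃ K : MvPolynomial (Fin 2) ℚ,
    ∀ (V : Type _) [AddCommGroup V] [Module ℂ V] (c h : ℂ) (L : ℤ → Module.End ℂ V) (v : V),
      VirasoroFamily c L → IsHighestWeightVector L h v →
        wordOp L w v = aeval ![c, h] K • v ∧ wordOp L (dagger w) v = aeval ![c, h] K • v)
    ?_ ?_ ?_ ?_ w
  · intro a b x y h1 h2 h3 hs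
    simp only [List.sum_append, List.sum_cons] at h1 h2 h3 hs
    obtain ⟨K1, h1⟩ := h1 (by omega)
    obtain ⟨K2, h2⟩ := h2 (by omega)
    have h3' : ∃ K3 : MvPolynomial (Fin 2) ℚ, x + y = 0 →
      ∀ (V : Type _) [AddCommGroup V] [Module ℂ V] (c h : ℂ) (L : ℤ → Module.End ℂ V) (v : V),
      VirasoroFamily c L → IsHighestWeightVector L h v →
        wordOp L (a ++ b) v = aeval ![c, h] K3 • v ∧
          wordOp L (dagger (a ++ b)) v = aeval ![c, h] K3 • v := by
      by_cases hxy : x + y = 0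
      · obtain ⟨K3, h3⟩ := h3 hxy (by omega)
        exact ⟨K3, fun _ => h3⟩
      · exact ⟨0, fun h => absurd h hxy⟩
    obtain ⟨K3, h3⟩ := h3'
    refine ⟨K1 + C ((x : ℚ) - y) * K2
      + (if x + y = 0 then C ((x : ℚ) * ((x : ℚ) ^ 2 - 1) / 12) * X 0 else 0) * K3, ?_⟩
    intro V _ _ c h L v hL hv
    obtain ⟨h1, h1'⟩ := h1 V c h L v hL hv
    obtain ⟨h2, h2'⟩ := h2 V c h L v hL hv
    have hd : ∀ p q : ℤ, dagger (a ++ p :: q :: b) = dagger b ++ (-q) :: (-p) :: dagger a := by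
      intro p q; simp [dagger_append, dagger_cons]
    have hd2 : ∀ p : ℤ, dagger (a ++ p :: b) = dagger b ++ (-p) :: dagger a := by
      intro p; simp [dagger_append, dagger_cons]
    rw [hd] at h1'
    rw [hd2] at h2'
    have e : -y + -x = -(x + y) := by ring
    rw [hd, wordOp_swap hL a b x y, wordOp_swap hL (dagger b) (dagger a) (-y) (-x), e]
    simp only [LinearMap.add_apply, LinearMap.smul_apply, h1, h2, h1', h2', neg_eq_zero]
    by_cases hxy : x + y = 0
    · obtain ⟨h3, h3'⟩ := h3 hxy V c h L v hL hv
      rw [dagger_append] at h3'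
      rw [h3, h3']
      obtain rfl : y = -x := by omega
      simp only [hxy, if_true, smul_smul, ← add_smul]
      constructor
      · congr 1; simp [-mul_eq_mul_right_iff]; ring
      · congr 1; simp [-mul_eq_mul_right_iff]; ring
    · simp only [hxy, if_false, smul_smul, ← add_smul, zero_smul, add_zero]
      constructor
      · congr 1; simp
      · congr 1; simp [-mul_eq_mul_right_iff]; ring
  · intro w h1 h2; omega
  · intro _; exact ⟨1, by simp [dagger, wordOp]⟩
  · intro w x hx ih hs
    simp only [List.sum_append, List.sum_singleton] at hs
    rcases hx.eq_or_lt with rfl | hx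
    · obtain ⟨K, hK⟩ := ih w le_rfl (by omega)
      refine ⟨X 1 * K, fun V _ _ c h L v hL hv => ?_⟩
      obtain ⟨h1, h2⟩ := hK V c h L v hL hv
      rw [dagger_append]
      simp only [dagger, List.map_cons, List.map_nil, List.reverse_singleton, neg_zero] at h2 ⊢
      simp only [wordOp_append, wordOp_cons, wordOp_nil, mul_one, Module.End.mul_apply, h2, hv.2,
        map_smul, h1, smul_smul]
      simp [mul_comm]
    · refine ⟨0, fun V _ _ c h L v hL hv => ?_⟩
      have h0 : wordOp L (dagger w) v = 0 := wordOp_pos hL hv _ (by rw [dagger_sum]; omega)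
      rw [dagger_append]
      simp [wordOp_append, wordOp_cons, wordOp_nil, hv.1 x hx, h0, dagger_cons]

universe u

/-! ### The bosonic Fock space and its Virasoro operators -/

section Fock

open MvPolynomial

/-- The bosonic Fock space: polynomials in `x₁, x₂, …`, the variable `X k` being `x_{k+1}`. -/
abbrev Fock : Type := MvPolynomial ℕ ℂ

/-- The Heisenberg operators: `a (-(k+1))` multiplies by `X k`, `a (k+1)` is
`(k+1) ∂/∂(X k)`, and `a 0` is the scalar `α`. -/
noncomputable def heis (α : ℂ) : ℤ → Module.End ℂ Fock
  | .ofNat 0 => α • 1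
  | .ofNat (k + 1) => ((k : ℂ) + 1) • (pderiv k : Derivation ℂ Fock Fock).toLinearMap
  | .negSucc k => LinearMap.mulLeft ℂ (X k)

variable (α : ℂ)

lemma pderiv_comm (k l : ℕ) (f : Fock) : pderiv k (pderiv l f) = pderiv l (pderiv k f) := by
  have h : ⁅(pderiv k : Derivation ℂ Fock Fock), (pderiv l : Derivation ℂ Fock Fock)⁆ = 0 := by
    refine derivation_ext fun i => ?_
    rw [Derivation.commutator_apply, pderiv_X, pderiv_X]
    simp only [Pi.single_apply]
    split_ifs <;> simp
  have := congrArg (fun D : Derivation ℂ Fock Fock => D f) h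
  simpa [Derivation.commutator_apply, sub_eq_zero] using this

lemma heis_zero : heis α 0 = α • 1 := rfl

lemma heis_negSucc (k : ℕ) (f : Fock) : heis α (Int.negSucc k) f = X k * f := rfl

lemma heis_succ (k : ℕ) (f : Fock) : heis α ((k : ℤ) + 1) f = ((k : ℂ) + 1) • pderiv k f := rfl

lemma heis_one {n : ℤ} (hn : 0 < n) : heis α n 1 = 0 := by
  obtain ⟨k, rfl⟩ : ∃ k : ℕ, n = (k : ℤ) + 1 := ⟨(n - 1).toNat, by omega⟩
  simp [heis_succ]

lemma heis_nonpos {n : ℤ} (hn : n ≤ 0) (f : Fock) : heis α n f = heis α n 1 * f := by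
  rcases n with (_ | k) | k
  · change α • f = (α • (1 : Fock)) * f
    simp
  · exact absurd hn (by simp)
  · simp [heis_negSucc]

lemma heis_comm (m n : ℤ) :
    heis α m * heis α n - heis α n * heis α m
      = (if m + n = 0 then (m : ℂ) else 0) • (1 : Module.End ℂ Fock) := by
  rcases m with (_ | k) | k
  · have : heis α (Int.ofNat 0) = α • 1 := rfl
    rw [this]; simp
  · rcases n with (_ | l) | l
    · have : heis α (Int.ofNat 0) = α • 1 := rfl
      rw [this]
      have : ¬ (Int.ofNat (k + 1) + Int.ofNat 0 = 0) := by simp; omega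
      rw [if_neg this]
      simp
    · have : ¬ (Int.ofNat (k + 1) + Int.ofNat (l + 1) = 0) := by simp; omega
      rw [if_neg this]
      refine LinearMap.ext fun f => ?_
      have e : ∀ k : ℕ, Int.ofNat (k + 1) = (k : ℤ) + 1 := fun _ => rfl
      simp only [e, LinearMap.sub_apply, Module.End.mul_apply, heis_succ, map_smul, pderiv_comm k l]
      rw [smul_comm]; simp
    · refine LinearMap.ext fun f => ?_
      have h : (Int.ofNat (k + 1) + Int.negSucc l = 0) ↔ k = l := by
        simp; omega
      have e : Int.ofNat (k + 1) = (k : ℤ) + 1 := rfl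
      simp only [h]
      simp only [e, LinearMap.sub_apply, Module.End.mul_apply, heis_negSucc, heis_succ,
        pderiv_mul, pderiv_X]
      by_cases hkl : k = l
      · subst hkl
        simp [smul_add]
      · simp [hkl, Ne.symm hkl]
  · rcases n with (_ | l) | l
    · have : heis α (Int.ofNat 0) = α • 1 := rfl
      rw [this]
      simp
    · refine LinearMap.ext fun f => ?_
      have h : (Int.negSucc k + Int.ofNat (l + 1) = 0) ↔ k = l := by
        simp; omega
      have e : Int.ofNat (l + 1) = (l : ℤ) + 1 := rfl
      simp only [h]
      simp only [e, LinearMap.sub_apply, Module.End.mul_apply, heis_negSucc, heis_succ,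
        pderiv_mul, pderiv_X]
      by_cases hkl : k = l
      · subst hkl
        simp [smul_add, Int.negSucc_eq]
        module
      · simp [hkl]
    · have : ¬ (Int.negSucc k + Int.negSucc l = 0) := by  omega
      rw [if_neg this]
      refine LinearMap.ext fun f => ?_
      simp only [LinearMap.sub_apply, Module.End.mul_apply, heis_negSucc]
      simp; ring

/-- An operator commuting with all multiplications is determined by its value at the vacuum. -/
lemma eq_zero_of_comm {T : Module.End ℂ Fock}
    (hT : ∀ k : ℕ, T * heis α (Int.negSucc k) = heis α (Int.negSucc k) * T) (h1 : T 1 = 0) :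
    T = 0 := by
  refine LinearMap.ext fun f => ?_
  induction f using MvPolynomial.induction_on with
  | C a =>
    have : (C a : Fock) = a • 1 := by simp [smul_eq_C_mul]
    rw [this, map_smul, h1]; simp
  | add p q hp hq => rw [map_add, hp, hq]; simp
  | mul_X p k hp =>
    have := LinearMap.congr_fun (hT k) p
    simp only [Module.End.mul_apply, heis_negSucc] at this
    rw [mul_comm, this, hp]; simp

/-- A polynomial annihilated by all `a n`, `n > 0`, is constant. -/
lemma const_of_annihilated {f : Fock} (hf : ∀ k : ℕ, heis α ((k : ℤ) + 1) f = 0) :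
    f = C (constantCoeff f) := by
  classical
  ext m
  rw [coeff_C]
  split_ifs with hm
  · rw [← hm]; rfl
  · obtain ⟨k, hk⟩ := Finsupp.ne_iff.mp (Ne.symm hm)
    have h := hf k
    rw [heis_succ] at h
    have h0 : ((k : ℂ) + 1) ≠ 0 := by exact_mod_cast Nat.succ_ne_zero k
    have h2 := (smul_eq_zero.mp h).resolve_left h0
    have h3 := coeff_pderiv (i := k) f (m - Finsupp.single k 1)
    have hle : Finsupp.single k 1 ≤ m := by
      rw [Finsupp.single_le_iff]
      exact Nat.one_le_iff_ne_zero.mpr hk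
    rw [h2, tsub_add_cancel_of_le hle, coeff_zero] at h3
    exact (mul_eq_zero.mp h3.symm).resolve_right 
      (by exact_mod_cast Nat.succ_ne_zero ((m - Finsupp.single k 1 : ℕ →₀ ℕ) k))

/-- The first-order part of the Virasoro operator, whose vacuum value is zero. -/
noncomputable def virDer (n : ℤ) : Derivation ℂ Fock Fock :=
  mkDerivation ℂ fun k : ℕ => ((k : ℂ) + 1) • heis α (n + Int.negSucc k) 1

/-- The Sugawara operators `½ ∑ :a_j a_{n-j}:` on the Fock space. The mixed terms of the
normally ordered sum form the derivation `virDer`; the pure annihilation and the pure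
creation terms (with `a 0` counted as creation) are finite sums. -/
noncomputable def sug (n : ℤ) : Module.End ℂ Fock :=
  (virDer α n).toLinearMap
    + (1 / 2 : ℂ) • ∑ j ∈ Finset.Ioo 0 n, heis α j * heis α (n - j)
    + (1 / 2 : ℂ) • ∑ j ∈ Finset.Icc n 0, heis α j * heis α (n - j)

lemma sug_one (n : ℤ) :
    sug α n 1 = (1 / 2 : ℂ) • ∑ j ∈ Finset.Icc n 0, heis α j (heis α (n - j) 1) := by
  have : ∑ j ∈ Finset.Ioo 0 n, heis α j (heis α (n - j) 1) = 0 := by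
    refine Finset.sum_eq_zero fun j hj => ?_
    rw [Finset.mem_Ioo] at hj
    rw [heis_one α (by omega), map_zero]
  simp [sug, LinearMap.sum_apply, this]

lemma mul_comm_aux {R : Type*} [Ring R] (A B C : R) :
    A * B * C - C * (A * B) = A * (B * C - C * B) + (A * C - C * A) * B := by
  noncomm_ring

lemma heis_mul_comm (i j m : ℤ) :
    heis α i * heis α j * heis α m - heis α m * (heis α i * heis α j)
      = (if j + m = 0 then (j : ℂ) else 0) • heis α i
        + (if i + m = 0 then (i : ℂ) else 0) • heis α j := by
  have h1 := heis_comm α j m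
  have h2 := heis_comm α i m
  have : heis α i * heis α j * heis α m - heis α m * (heis α i * heis α j)
    = heis α i * (heis α j * heis α m - heis α m * heis α j)
      + (heis α i * heis α m - heis α m * heis α i) * heis α j := mul_comm_aux _ _ _
  rw [this, h1, h2]
  simp

/-- The commutator of `∑ a_j a_{n-j}` over a reflection-invariant index set with `a m`. -/
lemma sum_heis_comm (s : Finset ℤ) (n m : ℤ) (hs : ∀ j, j ∈ s ↔ n - j ∈ s) :
    (∑ j ∈ s, heis α j * heis α (n - j)) * heis α m
        - heis α m * ∑ j ∈ s, heis α j * heis α (n - j)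
      = (if -m ∈ s then -2 * (m : ℂ) else 0) • heis α (n + m) := by
  rw [Finset.sum_mul, Finset.mul_sum, ← Finset.sum_sub_distrib]
  simp only [heis_mul_comm]
  rw [Finset.sum_add_distrib]
  have h1 : ∀ j : ℤ, (if j + m = 0 then (j : ℂ) else 0) • heis α (n - j)
      = if j = -m then (-(m : ℂ)) • heis α (n + m) else 0 := by
    intro j
    by_cases h : j = -m
    · subst h; simp
    · rw [if_neg (by omega), if_neg h, zero_smul]
  have h2 : ∀ j : ℤ, (if n - j + m = 0 then ((n - j : ℤ) : ℂ) else 0) • heis α j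
      = if j = n + m then (-(m : ℂ)) • heis α (n + m) else 0 := by
    intro j
    by_cases h : j = n + m
    · subst h; simp
    · rw [if_neg (by omega), if_neg h, zero_smul]
  simp only [h1, h2, Finset.sum_ite_eq']
  have h3 : n + m ∈ s ↔ -m ∈ s := by
    rw [hs (-m)]; simp
  simp only [h3]
  split_ifs
  · rw [← add_smul]; congr 1; ring
  · simp

/-- The commutator of the Sugawara operators with the creation operators. -/
lemma sug_comm_neg (n : ℤ) (k : ℕ) :
    sug α n * heis α (Int.negSucc k) - heis α (Int.negSucc k) * sug α n
      = ((k : ℂ) + 1) • heis α (n + Int.negSucc k) := by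
  have e : Int.negSucc k = -((k : ℤ) + 1) := by omega
  have hD : (virDer α n).toLinearMap * heis α (Int.negSucc k)
      - heis α (Int.negSucc k) * (virDer α n).toLinearMap
      = ((k : ℂ) + 1) • LinearMap.mulLeft ℂ (heis α (n + Int.negSucc k) 1) := by
    refine LinearMap.ext fun f => ?_
    simp only [LinearMap.sub_apply, Module.End.mul_apply, heis_negSucc, LinearMap.smul_apply,
      LinearMap.mulLeft_apply]
    have : virDer α n (X k) = ((k : ℂ) + 1) • heis α (n + Int.negSucc k) 1 := by
      simp [virDer, mkDerivation_X]
    change virDer α n (X k * f) - X k * virDer α n f = _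
    rw [Derivation.leibniz, this, smul_eq_mul, smul_eq_mul, add_sub_cancel_left, mul_comm,
      smul_mul_assoc]
  have h1 := sum_heis_comm α (Finset.Ioo 0 n) n (Int.negSucc k)
    (by intro j; simp only [Finset.mem_Ioo]; omega)
  have h2 := sum_heis_comm α (Finset.Icc n 0) n (Int.negSucc k)
    (by intro j; simp only [Finset.mem_Icc]; omega)
  have h3 : sug α n * heis α (Int.negSucc k) - heis α (Int.negSucc k) * sug α n
      = ((k : ℂ) + 1) • LinearMap.mulLeft ℂ (heis α (n + Int.negSucc k) 1)
        + (1 / 2 : ℂ) • ((if -Int.negSucc k ∈ Finset.Ioo 0 n then -2 * ((Int.negSucc k : ℤ) : ℂ)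
            else 0) • heis α (n + Int.negSucc k))
        + (1 / 2 : ℂ) • ((if -Int.negSucc k ∈ Finset.Icc n 0 then -2 * ((Int.negSucc k : ℤ) : ℂ)
            else 0) • heis α (n + Int.negSucc k)) := by
    rw [← hD, ← h1, ← h2, sug]
    simp only [add_mul, mul_add, smul_mul_assoc, mul_smul_comm, smul_sub]
    abel
  rw [h3, if_neg (c := -Int.negSucc k ∈ Finset.Icc n 0) (by simp only [Finset.mem_Icc]; omega)]
  by_cases hk : 0 < n + Int.negSucc k
  · rw [if_pos (by simp only [Finset.mem_Ioo]; omega), heis_one α hk, e]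
    simp only [LinearMap.mulLeft_zero_eq_zero, smul_zero, zero_smul, zero_add, add_zero, smul_smul]
    congr 1
    push_cast; ring
  · rw [if_neg (by simp only [Finset.mem_Ioo]; omega)]
    have : LinearMap.mulLeft ℂ (heis α (n + Int.negSucc k) 1) = heis α (n + Int.negSucc k) := by
      refine LinearMap.ext fun f => ?_
      rw [heis_nonpos α (by omega) f, LinearMap.mulLeft_apply]
    rw [this]; simp

/-- The Jacobi identity for `L, A, B` when `A` and `B` commute up to scalars. -/
lemma jacobi_aux {R : Type*} [Ring R] [Algebra ℂ R] {L A B A' B' : R} {s t u w p : ℂ}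
    (h1 : A * B - B * A = s • (1 : R)) (h2 : L * B - B * L = t • B')
    (h3 : A * B' - B' * A = u • (1 : R)) (h4 : A' * B - B * A' = w • (1 : R))
    (h : t * u + p * w = 0) :
    (L * A - A * L - p • A') * B = B * (L * A - A * L - p • A') := by
  rw [← sub_eq_zero]
  have e : (L * A - A * L - p • A') * B - B * (L * A - A * L - p • A')
      = (L * (A * B - B * A) - (A * B - B * A) * L)
        - (A * (L * B - B * L) - (L * B - B * L) * A) - p • (A' * B - B * A') := by
    simp only [sub_mul, mul_sub, smul_mul_assoc, mul_smul_comm, smul_sub, mul_assoc]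
    abel
  rw [e, h1, h2, h4, mul_smul_comm, smul_mul_assoc, mul_smul_comm, smul_mul_assoc, ← smul_sub t,
    h3, mul_one, one_mul, sub_self, zero_sub, smul_smul, smul_smul, ← neg_smul, ← sub_smul]
  rw [show -(t * u) - p * w = 0 by linear_combination -h, zero_smul]

/-- The Heisenberg operators transform as the modes of a primary field of weight one. For
`m > 0` both sides have the same commutators with the creation operators by the Jacobi
identity, so it is enough to compare them on the vacuum. -/
lemma sug_comm (n m : ℤ) :
    sug α n * heis α m - heis α m * sug α n = (-(m : ℂ)) • heis α (n + m) := by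
  rcases m with (_ | k) | k
  · have : heis α (Int.ofNat 0) = α • 1 := rfl
    rw [this]; simp
  · have e : Int.ofNat (k + 1) = (k : ℤ) + 1 := rfl
    rw [e]
    rw [← sub_eq_zero]
    apply eq_zero_of_comm α
    · intro l
      refine jacobi_aux (heis_comm α _ _) (sug_comm_neg α _ _) (heis_comm α _ _)
        (heis_comm α _ _) ?_
      have e2 : ((k : ℤ) + 1 + (n + Int.negSucc l) = 0) ↔
          (n + ((k : ℤ) + 1) + Int.negSucc l = 0) := by
        constructor <;> intro h <;> omega
      simp only [e2]
      split_ifs with h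
      · have h' : (n : ℂ) + (k + 1) - (l + 1) = 0 := by
          have : n + (k + 1) - (l + 1) = 0 := by omega
          exact_mod_cast this
        push_cast
        linear_combination (-((k : ℂ) + 1)) * h'
      · simp
    · have h := sum_heis_comm α (Finset.Icc n 0) n ((k : ℤ) + 1)
        (by intro j; simp only [Finset.mem_Icc]; omega)
      have h := LinearMap.congr_fun h 1
      simp only [LinearMap.sub_apply, Module.End.mul_apply, LinearMap.smul_apply,
        LinearMap.sum_apply, heis_one α (show (0 : ℤ) < k + 1 by omega), map_zero,
        zero_sub] at h ⊢
      rw [sug_one, map_smul, ← smul_neg, h]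
      by_cases hk : 0 < n + ((k : ℤ) + 1)
      · rw [heis_one α hk]; simp
      · rw [if_pos (by simp only [Finset.mem_Icc]; omega), smul_smul, ← sub_smul]
        convert zero_smul ℂ _ using 2
        push_cast; ring
  · rw [sug_comm_neg]; congr 1
    push_cast [Int.negSucc_eq]; ring

lemma constantCoeff_heis (p : ℤ) (f : Fock) (hp : p < 0) : constantCoeff (heis α p f) = 0 := by
  obtain ⟨k, rfl⟩ := Int.eq_negSucc_of_lt_zero hp
  simp [heis_negSucc]

lemma heis_zero_apply (f : Fock) : heis α 0 f = α • f := rfl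

lemma constantCoeff_heis_one (p : ℤ) :
    constantCoeff (heis α p 1) = if p = 0 then α else 0 := by
  rcases lt_trichotomy p 0 with h | rfl | h
  · rw [constantCoeff_heis α p 1 h, if_neg h.ne]
  · simp [heis_zero_apply, smul_eq_C_mul]
  · rw [heis_one α h, if_neg h.ne', map_zero]

/-- The vacuum expectation value of a product of two Heisenberg operators. -/
lemma constantCoeff_heis_heis (p q : ℤ) :
    constantCoeff (heis α p (heis α q 1))
      = if p + q = 0 then (if 0 < p then (p : ℂ) else if p = 0 then α ^ 2 else 0) else 0 := by
  rcases lt_trichotomy p 0 with h | rfl | h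
  · rw [constantCoeff_heis α p _ h]
    split_ifs <;> first | rfl | omega
  · rw [heis_zero_apply, smul_eq_C_mul, map_mul, constantCoeff_C, constantCoeff_heis_one]
    simp only [zero_add, lt_irrefl, if_false, if_true]
    split_ifs <;> ring
  · have e := LinearMap.congr_fun (heis_comm α p q) 1
    simp only [LinearMap.sub_apply, Module.End.mul_apply, LinearMap.smul_apply,
      heis_one α h, map_zero, sub_zero, Module.End.one_apply] at e
    rw [e, if_pos h, smul_eq_C_mul, map_mul, constantCoeff_C]
    simp

lemma constantCoeff_sug_one (n : ℤ) :
    constantCoeff (sug α n 1) = if n = 0 then α ^ 2 / 2 else 0 := by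
  rw [sug_one, smul_eq_C_mul, map_mul, constantCoeff_C, map_sum]
  simp only [constantCoeff_heis_heis]
  by_cases hn : n = 0
  · subst hn; simp; ring
  · rw [if_neg hn, Finset.sum_eq_zero, mul_zero]
    intro j hj
    rw [if_neg (by omega)]

lemma sug_one_of_pos {n : ℤ} (hn : 0 < n) : sug α n 1 = 0 := by
  rw [sug_one, Finset.Icc_eq_empty (by omega)]; simp

lemma sug_zero_one : sug α 0 1 = (α ^ 2 / 2) • 1 := by
  rw [sug_one]
  simp only [Finset.Icc_self, Finset.sum_singleton, sub_zero, heis_zero_apply, smul_smul]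
  congr 1; ring

lemma sug_heis_heis (m p q : ℤ) : sug α m (heis α p (heis α q 1))
    = heis α p (heis α q (sug α m 1)) + (-(p : ℂ)) • heis α (m + p) (heis α q 1)
      + (-(q : ℂ)) • heis α p (heis α (m + q) 1) := by
  have h1 := LinearMap.congr_fun (sug_comm α m p) (heis α q 1)
  have h2 := LinearMap.congr_fun (sug_comm α m q) 1
  simp only [LinearMap.sub_apply, Module.End.mul_apply, LinearMap.smul_apply] at h1 h2
  rw [sub_eq_iff_eq_add] at h1 h2
  rw [h1, h2, map_add, map_smul]
  abel

lemma sum_mul_sub (m : ℕ) :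
    ∑ j ∈ Finset.Icc (-(m : ℤ)) 0, (-(j : ℂ)) * ((m : ℂ) + j) = ((m : ℂ) ^ 3 - m) / 6 := by
  -- The factor `m` inside the sum is replaced by a free `x` to make the induction work.
  have h : ∀ x : ℂ, ∀ m : ℕ, ∑ j ∈ Finset.Icc (-(m : ℤ)) 0, (-(j : ℂ)) * (x + j)
      = x * (m * (m + 1) / 2) - m * (m + 1) * (2 * m + 1) / 6 := by
    intro x m
    induction m with
    | zero => simp
    | succ m ih =>
      have : Finset.Icc (-((m + 1 : ℕ) : ℤ)) 0
          = insert (-((m : ℤ) + 1)) (Finset.Icc (-(m : ℤ)) 0) := by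
        ext j; simp only [Finset.mem_insert, Finset.mem_Icc]; push_cast; omega
      rw [this, Finset.sum_insert (by simp), ih]
      push_cast; ring
  rw [h]; ring

/-- The scalar part of `L m L n` on the vacuum; the central term comes from
`½ ∑_{0<i<m} i (m - i) = (m³ - m) / 12`. -/
lemma constantCoeff_sug_sug (m n : ℤ) :
    constantCoeff (sug α m (sug α n 1)) = if m + n = 0 then
      (if 0 < m then ((m : ℂ) ^ 3 - m) / 12 + m * α ^ 2 else if m = 0 then α ^ 4 / 4 else 0)
      else 0 := by
  rcases lt_trichotomy n 0 with h | rfl | h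
  · have key : constantCoeff (sug α m (sug α n 1)) = (1 / 2 : ℂ) * ∑ j ∈ Finset.Icc n 0,
        ((-(j : ℂ)) * constantCoeff (heis α (m + j) (heis α (n - j) 1))
          + (-((n - j : ℤ) : ℂ)) * constantCoeff (heis α j (heis α (m + (n - j)) 1))) := by
      rw [sug_one, map_smul, map_sum, smul_eq_C_mul, map_mul, constantCoeff_C, map_sum]
      congr 1
      refine Finset.sum_congr rfl fun j hj => ?_
      rw [Finset.mem_Icc] at hj
      have h0 : constantCoeff (heis α j (heis α (n - j) (sug α m 1))) = 0 := by
        rcases hj.2.eq_or_lt with rfl | hj'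
        · rw [heis_zero_apply, smul_eq_C_mul, map_mul, constantCoeff_heis α _ _ (by omega), mul_zero]
        · rw [constantCoeff_heis α _ _ hj']
      rw [sug_heis_heis, map_add, map_add, h0, zero_add, smul_eq_C_mul, smul_eq_C_mul, map_mul,
        map_mul, constantCoeff_C, constantCoeff_C]
    rw [key]
    simp only [constantCoeff_heis_heis]
    by_cases hmn : m + n = 0
    · obtain ⟨k, rfl⟩ : ∃ k : ℕ, m = k := ⟨m.toNat, by omega⟩
      obtain rfl : n = -(k : ℤ) := by omega
      have hk : (0 : ℤ) < k := by omega
      rw [if_pos hmn, if_pos hk]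
      have h1 : ∀ j ∈ Finset.Icc (-(k : ℤ)) 0,
          ((-(j : ℂ)) * (if (k : ℤ) + j + (-(k : ℤ) - j) = 0 then
            (if 0 < (k : ℤ) + j then (((k : ℤ) + j : ℤ) : ℂ) else if (k : ℤ) + j = 0 then α ^ 2
              else 0) else 0)
          + (-((-(k : ℤ) - j : ℤ) : ℂ)) * (if j + (k + (-(k : ℤ) - j)) = 0 then
            (if 0 < j then (j : ℂ) else if j = 0 then α ^ 2 else 0) else 0))
          = (-(j : ℂ)) * ((k : ℂ) + j) + (if j = -(k : ℤ) then (k : ℂ) * α ^ 2 else 0)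
            + (if j = 0 then (k : ℂ) * α ^ 2 else 0) := by
        intro j hj
        rw [Finset.mem_Icc] at hj
        rw [if_pos (c := (k : ℤ) + j + (-(k : ℤ) - j) = 0) (by ring),
          if_pos (c := j + (k + (-(k : ℤ) - j)) = 0) (by ring), if_neg (c := 0 < j) (not_lt.mpr hj.2)]
        by_cases hj1 : j = 0
        · subst hj1
          have hk' : k ≠ 0 := by omega
          simp [hk']
        · rw [if_neg hj1, if_neg hj1]
          by_cases hj2 : j = -(k : ℤ)
          · subst hj2
            have hk' : k ≠ 0 := by omega
            simp
          · rw [if_pos (by omega), if_neg hj2]; push_cast; ring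
      rw [Finset.sum_congr rfl h1, Finset.sum_add_distrib, Finset.sum_add_distrib,
        Finset.sum_ite_eq', Finset.sum_ite_eq', sum_mul_sub,
        if_pos (by simp), if_pos (by simp)]
      push_cast; ring
    · rw [if_neg hmn, Finset.sum_eq_zero, mul_zero]
      intro j hj
      rw [if_neg (by omega), if_neg (by omega), mul_zero, mul_zero, add_zero]
  · rw [sug_zero_one, map_smul, smul_eq_C_mul, map_mul, constantCoeff_C, constantCoeff_sug_one]
    by_cases hm : m = 0
    · subst hm; simp; ring
    · simp [hm]
  · rw [sug_one_of_pos α h, map_zero, map_zero]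
    split_ifs <;> first | rfl | omega

/-- If `[L, a_k] = -k a_{m+k}`, `[M, a_k] = -k a_{n+k}` and `[N, a_k] = -k a_{m+n+k}`, then
`[L, M] - (m - n) N` minus any scalar commutes with `a_k`. Here `A, A₁, A₂, A₃` stand for
`a_k, a_{m+k}, a_{n+k}, a_{m+n+k}`. -/
lemma jacobi_aux₂ {R : Type*} [Ring R] [Algebra ℂ R] {L M N A A₁ A₂ A₃ : R}
    {m n k r : ℂ} (h1 : L * A - A * L = (-k) • A₁) (h2 : M * A - A * M = (-k) • A₂)
    (h3 : N * A - A * N = (-k) • A₃) (h4 : L * A₂ - A₂ * L = (-(n + k)) • A₃)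
    (h5 : M * A₁ - A₁ * M = (-(m + k)) • A₃) :
    (L * M - M * L - (m - n) • N - r • 1) * A = A * (L * M - M * L - (m - n) • N - r • 1) := by
  rw [← sub_eq_zero]
  have e : (L * M - M * L - (m - n) • N - r • 1) * A - A * (L * M - M * L - (m - n) • N - r • 1)
      = (L * (M * A - A * M) - (M * A - A * M) * L)
        - (M * (L * A - A * L) - (L * A - A * L) * M) - (m - n) • (N * A - A * N) := by
    simp only [sub_mul, mul_sub, smul_mul_assoc, mul_smul_comm, smul_sub, mul_assoc, mul_one,
      one_mul]
    abel
  rw [e, h1, h2, h3, mul_smul_comm, smul_mul_assoc, mul_smul_comm, smul_mul_assoc,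
    ← smul_sub (-k), ← smul_sub (-k), h4, h5]
  module

/-- The Sugawara operators satisfy the Virasoro relations with `c = 1`. The difference `T` of the
two sides commutes with all `a_k`, so it multiplies the vacuum by a constant, which is a
vacuum expectation value and vanishes. -/
lemma sug_virasoro : VirasoroFamily 1 (sug α) := by
  intro m n
  set r : ℂ := if m + n = 0 then 1 / 12 * (m : ℂ) * ((m : ℂ) ^ 2 - 1) else 0 with hr
  set T : Module.End ℂ Fock := sug α m * sug α n - sug α n * sug α m
    - ((m : ℂ) - n) • sug α (m + n) - r • 1 with hT
  have comm : ∀ k : ℤ, T * heis α k = heis α k * T := by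
    intro k
    refine jacobi_aux₂ (k := k) (sug_comm α m k) (sug_comm α n k) (sug_comm α (m + n) k)
      (A₁ := heis α (m + k)) ?_ ?_
    · rw [sug_comm, add_assoc]; push_cast; rfl
    · rw [sug_comm, ← add_assoc, add_comm n m]; push_cast; rfl
  have hc : T 1 = C (constantCoeff (T 1)) := by
    refine const_of_annihilated α fun k => ?_
    have := LinearMap.congr_fun (comm (k + 1)) 1
    simp only [Module.End.mul_apply] at this
    rw [← this, heis_one α (by omega), map_zero]
  have h0 : constantCoeff (T 1) = 0 := by
    simp only [hT, LinearMap.sub_apply, Module.End.mul_apply, LinearMap.smul_apply,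
      Module.End.one_apply, map_sub, smul_eq_C_mul, map_mul, constantCoeff_C,
      constantCoeff_sug_sug, constantCoeff_sug_one, map_one, hr]
    by_cases hmn : m + n = 0
    · obtain rfl : n = -m := by omega
      simp only [add_neg_cancel, neg_add_cancel, if_true, Left.neg_pos_iff, neg_eq_zero]
      push_cast
      rcases lt_trichotomy m 0 with h | rfl | h
      · simp only [h, h.ne, h.not_gt, if_true, if_false]; ring
      · simp
      · simp only [h, h.ne', h.not_gt, if_true, if_false]; ring
    · rw [if_neg hmn, if_neg hmn, if_neg hmn, if_neg (by omega)]; simp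
  have hz : T = 0 := eq_zero_of_comm α (fun k => comm _) (by rw [hc, h0, C_0])
  rw [hT, sub_eq_zero, sub_eq_iff_eq_add] at hz
  rw [hz, add_comm]

/-- The Sugawara operators with background charge `β`: `L_n + β n a_n`, with `L_0` shifted by
`-β²/2` so that the cocycle keeps the form `m (m² - 1)`. -/
noncomputable def fockVir (β : ℂ) (n : ℤ) : Module.End ℂ Fock :=
  sug α n + (β * n) • heis α n + (if n = 0 then -β ^ 2 / 2 else 0) • (1 : Module.End ℂ Fock)

/-- The effect on a Virasoro relation of adding the background-charge terms; `A, B, D` stand for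
`a_m, a_n, a_{m+n}`, and `s, t, u` for arbitrary scalar shifts. -/
lemma background_aux {R : Type*} [Ring R] [Algebra ℂ R] {L M N A B D : R}
    {m n β s t u r q : ℂ} (h1 : L * M - M * L = (m - n) • N + r • 1)
    (h2 : L * B - B * L = (-n) • D) (h3 : M * A - A * M = (-m) • D)
    (h4 : A * B - B * A = q • (1 : R)) :
    (L + (β * m) • A + s • 1) * (M + (β * n) • B + t • 1)
      - (M + (β * n) • B + t • 1) * (L + (β * m) • A + s • 1)
      = (m - n) • (N + (β * (m + n)) • D + u • 1)
        + (r + β ^ 2 * m * n * q - (m - n) * u) • (1 : R) := by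
  have e : (L + (β * m) • A + s • 1) * (M + (β * n) • B + t • 1)
      - (M + (β * n) • B + t • 1) * (L + (β * m) • A + s • 1)
      = (L * M - M * L) + (β * n) • (L * B - B * L) - (β * m) • (M * A - A * M)
        + (β * m * (β * n)) • (A * B - B * A) := by
    simp only [add_mul, mul_add, smul_mul_assoc, mul_smul_comm, smul_sub, mul_one,
      one_mul]
    module
  rw [e, h1, h2, h3, h4]
  module

lemma fockVir_virasoro (β : ℂ) : VirasoroFamily (1 - 12 * β ^ 2) (fockVir α β) := by
  intro m n
  have h3 := sug_comm α n m
  rw [add_comm n m] at h3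
  refine (background_aux (u := if m + n = 0 then -β ^ 2 / 2 else 0)
    (sug_virasoro α m n) (sug_comm α m n) h3 (heis_comm α m n)).trans ?_
  have e : fockVir α β (m + n) = sug α (m + n) + (β * ((m : ℂ) + n)) • heis α (m + n)
      + (if m + n = 0 then -β ^ 2 / 2 else 0) • (1 : Module.End ℂ Fock) := by
    simp [fockVir]
  rw [e]
  congr 2
  split_ifs with h
  · obtain rfl : n = -m := by omega
    push_cast; ring
  · ring

lemma fockVir_highest (β : ℂ) :
    IsHighestWeightVector (fockVir α β) (α ^ 2 / 2 - β ^ 2 / 2) (1 : Fock) := by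
  constructor
  · intro n hn
    have : ¬ n = 0 := by omega
    simp [fockVir, sug_one_of_pos α (show 0 < n by omega), heis_one α (show 0 < n by omega), this]
  · simp only [fockVir, LinearMap.add_apply, LinearMap.smul_apply, sug_zero_one, if_true,
      Module.End.one_apply, Int.cast_zero, mul_zero, zero_smul, add_zero, ← add_smul]
    congr 1; ring

end Fock

/-! ### Uniqueness and comparison of universes -/

section Transport

variable {V W : Type*} [AddCommGroup V] [Module ℂ V] [AddCommGroup W] [Module ℂ W]

lemma VirasoroFamily.transport {c : ℂ} {L : ℤ → Module.End ℂ V} (hL : VirasoroFamily c L)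
    (e : V ≃ₗ[ℂ] W) : VirasoroFamily c fun n => e.conjAlgEquiv ℂ (L n) := by
  intro m n
  simp only
  rw [← map_mul, ← map_mul, ← map_sub, hL m n, map_add, map_smul, map_smul, map_one]

lemma IsHighestWeightVector.transport {h : ℂ} {L : ℤ → Module.End ℂ V} {v : V}
    (hv : IsHighestWeightVector L h v) (e : V ≃ₗ[ℂ] W) :
    IsHighestWeightVector (fun n => e.conjAlgEquiv ℂ (L n)) h (e v) := by
  constructor
  · intro n hn
    simp [hv.1 n hn]
  · simp [hv.2]

lemma wordOp_transport (L : ℤ → Module.End ℂ V) (e : V ≃ₗ[ℂ] W) (w : List ℤ) (v : V) :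
    wordOp (fun n => e.conjAlgEquiv ℂ (L n)) w (e v) = e (wordOp L w v) := by
  induction w with
  | nil => simp [wordOp]
  | cons x w ih => rw [wordOp_cons, Module.End.mul_apply, ih, wordOp_cons]; simp

end Transport

/-- For every `(c, h)` there is a module with a nonzero highest-weight vector, in any universe. -/
lemma exists_highest (c h : ℂ) : ∃ (V : Type u) (_ : AddCommGroup V) (_ : Module ℂ V)
    (L : ℤ → Module.End ℂ V) (v : V),
    VirasoroFamily c L ∧ IsHighestWeightVector L h v ∧ v ≠ 0 := by
  -- Solve `1 - 12 β² = c` and `α²/2 - β²/2 = h`.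
  obtain ⟨β, hβ⟩ := IsAlgClosed.exists_pow_nat_eq ((1 - c) / 12) (n := 2) (by norm_num)
  obtain ⟨α, hα⟩ := IsAlgClosed.exists_pow_nat_eq (2 * h + β ^ 2) (n := 2) (by norm_num)
  have h1 := fockVir_virasoro α β
  have h2 := fockVir_highest α β
  rw [show 1 - 12 * β ^ 2 = c by rw [hβ]; ring] at h1
  rw [show α ^ 2 / 2 - β ^ 2 / 2 = h by rw [hα]; ring] at h2
  let e : Fock ≃ₗ[ℂ] ULift.{u} Fock := ULift.moduleEquiv.symm
  exact ⟨ULift.{u} Fock, inferInstance, inferInstance, _, e 1, h1.transport e, h2.transport e,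
    by simp⟩

open MvPolynomial in
/-- A polynomial in `(c, h)` is determined by its action on highest-weight vectors, which may
be tested in different universes. -/
lemma shapovalov_unique {n : ℕ} {lam mu : n.Partition} {K K' : MvPolynomial (Fin 2) ℚ}
    (hK : ShapovalovProp.{u} lam mu K) (hK' : ShapovalovProp.{u} lam mu K') : K = K' := by
  apply map_injective (algebraMap ℚ ℂ) (algebraMap ℚ ℂ).injective
  refine MvPolynomial.funext fun x => ?_
  obtain ⟨V, _, _, L, v, hL, hv, hv0⟩ := exists_highest.{u} (x 0) (x 1)
  have hx : ![x 0, x 1] = x := by ext i; fin_cases i <;> rfl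
  have h := (hK V _ _ L v hL hv).symm.trans (hK' V _ _ L v hL hv)
  have h' := smul_left_injective ℂ hv0 h
  rw [hx] at h'
  rwa [eval_map, eval_map, ← aeval_def, ← aeval_def]

/-! ### Partitions -/

/-- The word of the composite `L_μ ∘ L_{-λ}`. -/
def shapovalovWord {n : ℕ} (lam mu : n.Partition) : List ℤ :=
  (mu.parts.sort (· ≤ ·)).reverse.map (fun i : ℕ => (i : ℤ))
    ++ (lam.parts.sort (· ≤ ·)).map fun i : ℕ => -(i : ℤ)

lemma dagger_shapovalovWord {n : ℕ} (lam mu : n.Partition) :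
    dagger (shapovalovWord lam mu) = shapovalovWord mu lam := by
  simp [dagger, shapovalovWord, Function.comp_def]

lemma shapovalovWord_sum {n : ℕ} (lam mu : n.Partition) : (shapovalovWord lam mu).sum = 0 := by
  have h : ∀ p : n.Partition, ((p.parts.sort (· ≤ ·)).map fun i : ℕ => (i : ℤ)).sum = n := by
    intro p
    have h1 : (p.parts.sort (· ≤ ·)).sum = n := by
      rw [← Multiset.sum_coe, Multiset.sort_eq, p.parts_sum]
    have h2 := congrArg (Nat.cast : ℕ → ℤ) h1
    rwa [Nat.cast_list_sum] at h2
  have h3 : ((lam.parts.sort (· ≤ ·)).map fun i : ℕ => -(i : ℤ)).sum = -(n : ℤ) := by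
    rw [← h lam]
    generalize lam.parts.sort (· ≤ ·) = l
    induction l with
    | nil => simp
    | cons x l ih => simp only [List.map_cons, List.sum_cons, ih]; ring
  rw [shapovalovWord, List.sum_append, List.map_reverse, List.sum_reverse, h, h3]
  ring

lemma raiseOp_lowerOp {V : Type*} [AddCommGroup V] [Module ℂ V] (L : ℤ → Module.End ℂ V)
    {n : ℕ} (lam mu : n.Partition) (v : V) :
    raiseOp L mu (lowerOp L lam v) = wordOp L (shapovalovWord lam mu) v := by
  -- In `raiseOp` and `lowerOp` the list of parts is coerced to `List ℤ` through the list monad.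
  have hcast : ∀ l : List ℕ, (do let a ← l; pure (a : ℤ)) = l.map fun i : ℕ => (i : ℤ) := by
    intro l
    rw [List.bind_eq_flatMap]
    exact (List.map_eq_flatMap (l := l)).symm
  rw [shapovalovWord, wordOp_append, Module.End.mul_apply, wordOp, wordOp, raiseOp, lowerOp,
    hcast, hcast, List.map_map, List.map_map, List.map_map]
  rfl

/-- One polynomial serves for both `(λ, μ)` and `(μ, λ)`. -/
lemma shapovalov_exists {n : ℕ} (lam mu : n.Partition) : ∃ K : MvPolynomial (Fin 2) ℚ,
    ShapovalovProp.{u} lam mu K ∧ ShapovalovProp.{u} mu lam K := by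
  obtain ⟨K, hK⟩ := wordOp_zero.{u} _ (shapovalovWord_sum lam mu)
  refine ⟨K, fun V _ _ c h L v hL hv => ?_, fun V _ _ c h L v hL hv => ?_⟩
  · rw [raiseOp_lowerOp, (hK V c h L v hL hv).1]
  · rw [raiseOp_lowerOp, ← dagger_shapovalovWord, (hK V c h L v hL hv).2]

/-- The defining property does not depend on the universe of the test modules. -/
lemma ShapovalovProp.down {n : ℕ} {lam mu : n.Partition} {K : MvPolynomial (Fin 2) ℚ}
    (hK : ShapovalovProp.{u} lam mu K) : ShapovalovProp.{0} lam mu K := by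
  intro V _ _ c h L v hL hv
  let e : V ≃ₗ[ℂ] ULift.{u} V := ULift.moduleEquiv.symm
  have h1 := hK _ c h _ _ (hL.transport e) (hv.transport e)
  rw [raiseOp_lowerOp, wordOp_transport, ← map_smul] at h1
  rw [raiseOp_lowerOp]
  exact e.injective h1

theorem shapovalov_exists_unique_and_symm {n : ℕ} (lam mu : n.Partition) :
    (∃! K : MvPolynomial (Fin 2) ℚ, ShapovalovProp lam mu K) ∧
      ∀ K K' : MvPolynomial (Fin 2) ℚ,
        ShapovalovProp lam mu K → ShapovalovProp mu lam K' → K = K' := by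
  obtain ⟨K₀, h₀, h₀'⟩ := shapovalov_exists lam mu
  refine ⟨?_, fun K K' hK hK' => ?_⟩
  · obtain ⟨K, hK, -⟩ := shapovalov_exists lam mu
    exact ⟨K, hK, fun K' hK' => shapovalov_unique hK' hK⟩
  · exact (shapovalov_unique hK.down h₀).trans (shapovalov_unique hK'.down h₀').symm
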